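/- In the mixed type system M2: if ⊢_M2 T : ∀x{N^C[x] → ¬¬N[x]}, then T is a storage operator for classical integers, i.e. for every n ∈ ℕ there is a λC-term τₙ ≃β n̲ such that for every classical integer θₙ of value n (every closed λC-term with ⊢_M2 θₙ : N^C[sⁿ(0)]) there is a substitution σ with (T)θₙ f ≻_C (f)σ(τₙ) (f a fresh variable). -/

import Mathlib

/- Pure untyped λ-calculus with de Bruijn indices. -/

inductive Lam : Type
  | var : ℕ → Lam
  | app : Lam → Lam → Lam
  | abs : Lam → Lam
  deriving DecidableEq

namespace Lam

/-- Renaming of free variables. -/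
def rename (ρ : ℕ → ℕ) : Lam → Lam
  | var i => var (ρ i)
  | app u v => app (u.rename ρ) (v.rename ρ)
  | abs u => abs (u.rename (fun i => match i with | 0 => 0 | j+1 => ρ j + 1))

/-- Lifting of a simultaneous substitution under a binder. -/
def liftSub (σ : ℕ → Lam) : ℕ → Lam
  | 0 => var 0
  | i+1 => (σ i).rename (· + 1)

/-- Simultaneous (capture-avoiding) substitution of the free variables. -/
def subst (σ : ℕ → Lam) : Lam → Lam
  | var i => σ i
  | app u v => app (u.subst σ) (v.subst σ)
  | abs u => abs (u.subst (liftSub σ))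

/-- `u.subst0 v` is `u[v/x]` for the first variable. -/
def subst0 (u v : Lam) : Lam :=
  u.subst (fun i => match i with | 0 => v | j+1 => var j)

/-- One step of β-reduction (anywhere in the term). -/
inductive Beta : Lam → Lam → Prop
  | beta (u v : Lam) : Beta (app (abs u) v) (u.subst0 v)
  | appL {u u'} (v) : Beta u u' → Beta (app u v) (app u' v)
  | appR (u) {v v'} : Beta v v' → Beta (app u v) (app u v')
  | abs {u u'} : Beta u u' → Beta (abs u) (abs u')

/-- β-equivalence `≃β`. -/
def BetaEq : Lam → Lam → Prop := Relation.EqvGen Beta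

/-- A term is normal if it has no β-redex. -/
def Normal (t : Lam) : Prop := ∀ u, ¬ Beta t u

def IsAbs : Lam → Prop
  | abs _ => True
  | _ => False

/-- One step of head reduction: reduction of the head redex. -/
inductive HeadStep : Lam → Lam → Prop
  | beta (u v) : HeadStep (app (abs u) v) (u.subst0 v)
  | appL {u u'} (v) : ¬ u.IsAbs → HeadStep u u' → HeadStep (app u v) (app u' v)
  | abs {u u'} : HeadStep u u' → HeadStep (abs u) (abs u')

/-- `HeadRedN n u v` : `u` head-reduces to `v` in exactly `n` steps (`u ≻ v` with `n(u,v) = n`). -/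
inductive HeadRedN : ℕ → Lam → Lam → Prop
  | refl (u) : HeadRedN 0 u u
  | step {n u v w} : HeadStep u v → HeadRedN n v w → HeadRedN (n+1) u w

/-- `u ≻ v` : `v` is obtained from `u` by some head reductions. -/
def HeadRed (u v : Lam) : Prop := ∃ n, HeadRedN n u v

/-- Head normal form. -/
def HeadNF (t : Lam) : Prop := ∀ u, ¬ HeadStep t u

def ClosedUnder : ℕ → Lam → Prop
  | k, var i => i < k
  | k, app u v => ClosedUnder k u ∧ ClosedUnder k v
  | k, abs u => ClosedUnder (k+1) u

/-- Closed λ-term. -/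
def Closed (t : Lam) : Prop := ClosedUnder 0 t

/-- `(f)ⁿx` : `iterApp f n x = (f)(f)…(f)x`. -/
def iterApp (f : Lam) : ℕ → Lam → Lam
  | 0, x => x
  | n+1, x => app f (iterApp f n x)

/-- The Church integer `n̲ = λxλf(f)ⁿx`. -/
def church (n : ℕ) : Lam := abs (abs (iterApp (var 0) n (var 1)))

/-- `(t)w₁…wₖ`. -/
def appList (t : Lam) (ws : List Lam) : Lam := ws.foldl app t

/-- `T` is a storage operator for the closed normal term `t` :
there is `τ ≃β t` such that for every `θ ≃β t` there is a substitution `σ`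
(not touching the fresh variable `f`, represented by the de Bruijn index `0`)
with `(T)θf ≻ (f)σ(τ)`. -/
def IsStorageFor (T t : Lam) : Prop :=
  Closed T ∧ ∃ τ, BetaEq τ t ∧ ∀ θ, BetaEq θ t →
    ∃ σ : ℕ → Lam, σ 0 = var 0 ∧
      HeadRed (app (app T θ) (var 0)) (app (var 0) (τ.subst σ))

end Lam

/- Second order predicate logic : the types of the AF2 type system. -/

/-- A first order language: function symbols with arities, and predicate symbols. -/
structure Sig where
  Fn : Type
  arFn : Fn → ℕ
  Pr : Type

/-- First order terms over `S` (de Bruijn indices for first order variables). -/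
inductive FOTerm (S : Sig) : Type
  | var : ℕ → FOTerm S
  | fn : (f : S.Fn) → (Fin (S.arFn f) → FOTerm S) → FOTerm S

namespace FOTerm

variable {S : Sig}

def rename (ρ : ℕ → ℕ) : FOTerm S → FOTerm S
  | var i => var (ρ i)
  | fn f ts => fn f (fun i => (ts i).rename ρ)

def liftSub (σ : ℕ → FOTerm S) : ℕ → FOTerm S
  | 0 => var 0
  | i+1 => (σ i).rename (· + 1)

/-- Simultaneous substitution on first order terms. -/
def subst (σ : ℕ → FOTerm S) : FOTerm S → FOTerm S
  | var i => σ i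
  | fn f ts => fn f (fun i => (ts i).subst σ)

end FOTerm


/- Second order formulas with two kinds of predicate variables :
ordinary ones (`PK.pl`) and special ones (`PK.sp`). -/

inductive PK : Type
  | pl : PK
  | sp : PK
  deriving DecidableEq

/-- `FOTerm.freeIn j u` : the variable `j` occurs in `u`. -/
def FOTerm.freeIn {S : Sig} (j : ℕ) : FOTerm S → Prop
  | .var i => i = j
  | .fn _ ts => ∃ i, (ts i).freeIn j

/-- Formulas with two kinds of predicate variables, each kind having its own
de Bruijn index space. -/
inductive Form (S : Sig) : Type
  | bot : Form S
  | pr : S.Pr → List (FOTerm S) → Form S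
  | pvar : PK → ℕ → List (FOTerm S) → Form S
  | arr : Form S → Form S → Form S
  | fall : Form S → Form S
  | pall : PK → Form S → Form S

namespace Form

variable {S : Sig}

/-- `¬A = A → ⊥`. -/
def neg (A : Form S) : Form S := arr A bot

def substFO (σ : ℕ → FOTerm S) : Form S → Form S
  | bot => bot
  | pr P ts => pr P (ts.map (FOTerm.subst σ))
  | pvar k X ts => pvar k X (ts.map (FOTerm.subst σ))
  | arr A B => arr (A.substFO σ) (B.substFO σ)
  | fall A => fall (A.substFO (FOTerm.liftSub σ))
  | pall k A => pall k (A.substFO σ)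

/-- `A[u/x]` for the first first-order variable. -/
def substFO0 (A : Form S) (u : FOTerm S) : Form S :=
  A.substFO (fun i => match i with | 0 => u | j+1 => FOTerm.var j)

def shiftFO (A : Form S) : Form S := A.substFO (fun i => FOTerm.var (i+1))

/-- Renaming of the free predicate variables of kind `k`. -/
def rename2 (k : PK) (ρ : ℕ → ℕ) : Form S → Form S
  | bot => bot
  | pr P ts => pr P ts
  | pvar k' X ts => pvar k' (if k' = k then ρ X else X) ts
  | arr A B => arr (A.rename2 k ρ) (B.rename2 k ρ)
  | fall A => fall (A.rename2 k ρ)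
  | pall k' A =>
      pall k' (A.rename2 k
        (if k' = k then (fun i => match i with | 0 => 0 | j+1 => ρ j + 1) else ρ))

def bump (e : PK → ℕ) (k : PK) : PK → ℕ := fun k' => if k' = k then e k' + 1 else e k'

/-- `inst2 k G d e A` : substitution `A[G/X]` for the predicate variable `X`
of kind `k` and de Bruijn index `e k`; `d` counts the crossed first order
binders and `e` the crossed second order binders of each kind. Each atomic
subformula `X(t₁,…,tₘ)` is replaced by `G[t₁/x₁,…,tₘ/xₘ]`. -/
def inst2 (k : PK) (G : Form S) : ℕ → (PK → ℕ) → Form S → Form S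
  | _, _, bot => bot
  | _, _, pr P ts => pr P ts
  | d, e, pvar k' X ts =>
      if k' = k ∧ X = e k then
        ((G.rename2 PK.pl (· + e PK.pl)).rename2 PK.sp (· + e PK.sp)).substFO
          (fun i => if h : i < ts.length then ts.get ⟨i, h⟩
                    else FOTerm.var (i - ts.length + d))
      else pvar k' (if k' = k ∧ e k < X then X - 1 else X) ts
  | d, e, arr A B => arr (inst2 k G d e A) (inst2 k G d e B)
  | d, e, fall A => fall (inst2 k G (d+1) e A)
  | d, e, pall k' A => pall k' (inst2 k G d (bump e k') A)

/-- `A[G/X]` for the first predicate variable of kind `k`. -/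
def inst2_0 (k : PK) (A G : Form S) : Form S := inst2 k G 0 (fun _ => 0) A

/-- The first order variable `x` (de Bruijn index `j`) occurs free in the formula. -/
def freeFO : ℕ → Form S → Prop
  | _, bot => False
  | j, pr _ ts => ∃ u ∈ ts, FOTerm.freeIn j u
  | j, pvar _ _ ts => ∃ u ∈ ts, FOTerm.freeIn j u
  | j, arr A B => freeFO j A ∨ freeFO j B
  | j, fall A => freeFO (j+1) A
  | j, pall _ A => freeFO j A

/-- The predicate variable of kind `k` and index `j` occurs free in the formula. -/
def freeP (k : PK) : ℕ → Form S → Prop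
  | _, bot => False
  | _, pr _ _ => False
  | j, pvar k' X _ => k' = k ∧ X = j
  | j, arr A B => freeP k j A ∨ freeP k j B
  | j, fall A => freeP k j A
  | j, pall k' A => freeP k (if k' = k then j + 1 else j) A

/-- Closed formula : no free first order variable and no free predicate variable. -/
def ClosedF (A : Form S) : Prop :=
  (∀ j, ¬ freeFO j A) ∧ (∀ k j, ¬ freeP k j A)

/-- Formulas of the AF2 type system : no special predicate variable occurs. -/
def Plain : Form S → Prop
  | bot => True
  | pr _ _ => True
  | pvar k _ _ => k = PK.pl
  | arr A B => Plain A ∧ Plain B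
  | fall A => Plain A
  | pall k A => k = PK.pl ∧ Plain A

/-- The formula does not contain `⊥`. -/
def NoBot : Form S → Prop
  | bot => False
  | pr _ _ => True
  | pvar _ _ _ => True
  | arr A B => NoBot A ∧ NoBot B
  | fall A => NoBot A
  | pall _ A => NoBot A

end Form

mutual
/-- `∀`-positive types : the second order quantifier only occurs positively. -/
inductive PosT {S : Sig} : Form S → Prop
  | bot : PosT Form.bot
  | pr (P : S.Pr) (ts : List (FOTerm S)) : PosT (Form.pr P ts)
  | pvar (k : PK) (X : ℕ) (ts : List (FOTerm S)) : PosT (Form.pvar k X ts)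
  | arr {A B : Form S} : NegT A → PosT B → PosT (Form.arr A B)
  | fall {A : Form S} : PosT A → PosT (Form.fall A)
  | pall {A : Form S} : PosT A → PosT (Form.pall PK.pl A)

/-- `∀`-negative types : the second order quantifier only occurs negatively. -/
inductive NegT {S : Sig} : Form S → Prop
  | bot : NegT Form.bot
  | pr (P : S.Pr) (ts : List (FOTerm S)) : NegT (Form.pr P ts)
  | pvar (k : PK) (X : ℕ) (ts : List (FOTerm S)) : NegT (Form.pvar k X ts)
  | arr {A B : Form S} : PosT A → NegT B → NegT (Form.arr A B)
  | fall {A : Form S} : NegT A → NegT (Form.fall A)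
  | pall {A : Form S} : NegT A → ¬ Form.freeP PK.pl 0 A → NegT (Form.pall PK.pl A)
end

/-- Axioms of the equational theory: substitution instances of the equations of `E`. -/
def EqAx {S : Sig} (E : Set (FOTerm S × FOTerm S)) (u v : FOTerm S) : Prop :=
  ∃ p ∈ E, ∃ σ : ℕ → FOTerm S, u = p.1.subst σ ∧ v = p.2.subst σ

/-- `u ≈ v`. -/
def EqE {S : Sig} (E : Set (FOTerm S × FOTerm S)) : FOTerm S → FOTerm S → Prop :=
  Relation.EqvGen (EqAx E)

/- The language of arithmetic: a constant 0 and a unary function symbol s. -/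

inductive NatFn : Type
  | zero : NatFn
  | succ : NatFn

/-- The signature with a constant symbol `0` and a unary function symbol `s`. -/
def NatSig : Sig where
  Fn := NatFn
  arFn := fun f => match f with | .zero => 0 | .succ => 1
  Pr := Empty

/-- The first order term `0`. -/
def zeroT : FOTerm NatSig := .fn NatFn.zero (fun i => i.elim0)

/-- The first order term `s(u)`. -/
def succT (u : FOTerm NatSig) : FOTerm NatSig := .fn NatFn.succ (fun _ => u)

/-- The first order term `sⁿ(0)`. -/
def numT : ℕ → FOTerm NatSig
  | 0 => zeroT
  | n+1 => succT (numT n)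

/-- A set of equations is adequate with the type of integers iff
`s(a) ≉ 0` and `s(a) ≈ s(b)` implies `a ≈ b`. -/
def Adequate (E : Set (FOTerm NatSig × FOTerm NatSig)) : Prop :=
  (∀ a, ¬ EqE E (succT a) zeroT) ∧
  (∀ a b, EqE E (succT a) (succT b) → EqE E a b)


/- The λC-calculus : λ-calculus with an extra constant C. -/

inductive LC : Type
  | var : ℕ → LC
  | app : LC → LC → LC
  | abs : LC → LC
  | cc : LC

namespace LC

def rename (ρ : ℕ → ℕ) : LC → LC
  | var i => var (ρ i)
  | app u v => app (u.rename ρ) (v.rename ρ)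
  | abs u => abs (u.rename (fun i => match i with | 0 => 0 | j+1 => ρ j + 1))
  | cc => cc

def liftSub (σ : ℕ → LC) : ℕ → LC
  | 0 => var 0
  | i+1 => (σ i).rename (· + 1)

def subst (σ : ℕ → LC) : LC → LC
  | var i => σ i
  | app u v => app (u.subst σ) (v.subst σ)
  | abs u => abs (u.subst (liftSub σ))
  | cc => cc

def subst0 (u v : LC) : LC :=
  u.subst (fun i => match i with | 0 => v | j+1 => var j)

/-- One step of β-reduction on λC-terms. -/
inductive Beta : LC → LC → Prop
  | beta (u v : LC) : Beta (app (abs u) v) (u.subst0 v)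
  | appL {u u'} (v) : Beta u u' → Beta (app u v) (app u' v)
  | appR (u) {v v'} : Beta v v' → Beta (app u v) (app u v')
  | abs {u u'} : Beta u u' → Beta (abs u) (abs u')

/-- β-equivalence on λC-terms. -/
def BetaEq : LC → LC → Prop := Relation.EqvGen Beta

def ClosedUnder : ℕ → LC → Prop
  | k, var i => i < k
  | k, app u v => ClosedUnder k u ∧ ClosedUnder k v
  | k, abs u => ClosedUnder (k+1) u
  | _, cc => True

def Closed (t : LC) : Prop := ClosedUnder 0 t

/-- Pure λ-terms : the constant `C` does not occur. -/
def Pure : LC → Prop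
  | var _ => True
  | app u v => Pure u ∧ Pure v
  | abs u => Pure u
  | cc => False

def iterApp (f : LC) : ℕ → LC → LC
  | 0, x => x
  | n+1, x => app f (iterApp f n x)

/-- The Church integer `n̲ = λxλf(f)ⁿx` as a λC-term. -/
def church (n : ℕ) : LC := abs (abs (iterApp (var 0) n (var 1)))

/-- `(t)t₁…tₙ`. -/
def appSpine (t : LC) (ts : List LC) : LC := ts.foldl app t

/-- One step of head C-reduction :
`(λx u)t t₁…tₙ → (u[t/x])t₁…tₙ` and `(C)t t₁…tₙ → (t)λx(x)t₁…tₙ`. -/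
inductive HCStep : LC → LC → Prop
  | beta (u t : LC) (ts : List LC) :
      HCStep (appSpine (app (abs u) t) ts) (appSpine (u.subst0 t) ts)
  | cred (t : LC) (ts : List LC) :
      HCStep (appSpine (app cc t) ts)
        (app t (abs (appSpine (var 0) (ts.map (rename (· + 1))))))

/-- `u ≻_C v`. -/
def HCRed : LC → LC → Prop := Relation.ReflTransGen HCStep

end LC

/-- Classical types : types ending with `⊥` or with a classical variable. -/
inductive EndsClassical {S : Sig} : Form S → Prop
  | bot : EndsClassical Form.bot
  | cvar (X : ℕ) (ts : List (FOTerm S)) : EndsClassical (Form.pvar PK.sp X ts)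
  | arr (A : Form S) {B : Form S} : EndsClassical B → EndsClassical (Form.arr A B)
  | fall {A : Form S} : EndsClassical A → EndsClassical (Form.fall A)
  | pall (k : PK) {A : Form S} : EndsClassical A → EndsClassical (Form.pall k A)

/-- The mixed type system M2 over λC-terms : the rules of AF2 (with ordinary
predicate variables, `PK.pl`), the axiom (0′) `C : ∀X_C{¬¬X_C → X_C}`, and the
rules (6″) and (7″) for classical variables (`PK.sp`), instantiation of a
classical variable being restricted to classical types. -/
inductive M2 (S : Sig) (E : Set (FOTerm S × FOTerm S)) :
    List (Form S) → LC → Form S → Prop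
  | ccAx {Γ : List (Form S)} :
      M2 S E Γ .cc
        (.pall PK.sp (.arr (.arr (.arr (.pvar PK.sp 0 []) .bot) .bot)
          (.pvar PK.sp 0 [])))
  | var {Γ : List (Form S)} {i : ℕ} {A : Form S} :
      Γ[i]? = some A → M2 S E Γ (.var i) A
  | absI {Γ : List (Form S)} {A B : Form S} {t : LC} :
      M2 S E (A :: Γ) t B → M2 S E Γ (.abs t) (.arr A B)
  | appE {Γ : List (Form S)} {A B : Form S} {u v : LC} :
      M2 S E Γ u (.arr A B) → M2 S E Γ v A → M2 S E Γ (.app u v) B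
  | fallI {Γ : List (Form S)} {t : LC} {A : Form S} :
      M2 S E (Γ.map Form.shiftFO) t A → M2 S E Γ t (.fall A)
  | fallE {Γ : List (Form S)} {t : LC} {A : Form S} (u : FOTerm S) :
      M2 S E Γ t (.fall A) → M2 S E Γ t (A.substFO0 u)
  | pallI {Γ : List (Form S)} {t : LC} {A : Form S} :
      M2 S E (Γ.map (Form.rename2 PK.pl (· + 1))) t A → M2 S E Γ t (.pall PK.pl A)
  | pallE {Γ : List (Form S)} {t : LC} {A : Form S} (G : Form S) :
      M2 S E Γ t (.pall PK.pl A) → M2 S E Γ t (Form.inst2_0 PK.pl A G)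
  | eqE {Γ : List (Form S)} {t : LC} {A : Form S} {u v : FOTerm S} :
      M2 S E Γ t (A.substFO0 u) → EqE E u v → M2 S E Γ t (A.substFO0 v)
  | pallIC {Γ : List (Form S)} {t : LC} {A : Form S} :
      M2 S E (Γ.map (Form.rename2 PK.sp (· + 1))) t A → M2 S E Γ t (.pall PK.sp A)
  | pallEC {Γ : List (Form S)} {t : LC} {A : Form S} (G : Form S) :
      EndsClassical G → M2 S E Γ t (.pall PK.sp A) →
      M2 S E Γ t (Form.inst2_0 PK.sp A G)

/-- The type of integers `N[u]` (resp. its translation `N^C[u]`), built with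
predicate variables of kind `k`. -/
def NFormK (k : PK) (u : FOTerm NatSig) : Form NatSig :=
  .pall k (.arr (.pvar k 0 [zeroT])
    (.arr (.fall (.arr (.pvar k 0 [FOTerm.var 0]) (.pvar k 0 [succT (FOTerm.var 0)])))
      (.pvar k 0 [u])))

/-- The type `∀x{N^C[x] → ¬¬N[x]}`. -/
def storTypeC : Form NatSig :=
  .fall (.arr (NFormK PK.sp (FOTerm.var 0))
    (Form.neg (Form.neg (NFormK PK.pl (FOTerm.var 0)))))

namespace Stor

/- Part 1: substitution calculus on λC-terms. -/

def upr (ρ : ℕ → ℕ) : ℕ → ℕ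
  | 0 => 0
  | j+1 => ρ j + 1

def cons (v : LC) (σ : ℕ → LC) : ℕ → LC
  | 0 => v
  | j+1 => σ j

theorem rename_abs (ρ : ℕ → ℕ) (u : LC) :
    (LC.abs u).rename ρ = LC.abs (u.rename (upr ρ)) := by
  simp only [LC.rename]
  rfl

theorem subst0_eq (u v : LC) : u.subst0 v = u.subst (cons v LC.var) := by
  simp only [LC.subst0]
  rfl

theorem rename_rename (t : LC) : ∀ (r s : ℕ → ℕ),
    (t.rename r).rename s = t.rename (fun i => s (r i)) := by
  induction t with
  | var i => intros; rfl
  | app u v ihu ihv => intro r s; simp [LC.rename, ihu, ihv]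
  | cc => intros; rfl
  | abs u ih =>
    intro r s
    simp only [rename_abs, ih]
    congr 2
    funext i
    cases i <;> rfl

theorem subst_rename (t : LC) : ∀ (r : ℕ → ℕ) (σ : ℕ → LC),
    (t.rename r).subst σ = t.subst (fun i => σ (r i)) := by
  induction t with
  | var i => intros; rfl
  | app u v ihu ihv => intro r s; simp [LC.rename, LC.subst, ihu, ihv]
  | cc => intros; rfl
  | abs u ih =>
    intro r s
    simp only [rename_abs, LC.subst, ih]
    congr 2
    funext i
    cases i <;> rfl

theorem rename_subst (t : LC) : ∀ (σ : ℕ → LC) (r : ℕ → ℕ),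
    (t.subst σ).rename r = t.subst (fun i => (σ i).rename r) := by
  induction t with
  | var i => intros; rfl
  | app u v ihu ihv => intro r s; simp [LC.rename, LC.subst, ihu, ihv]
  | cc => intros; rfl
  | abs u ih =>
    intro σ r
    simp only [rename_abs, LC.subst, ih]
    congr 2
    funext i
    cases i with
    | zero => rfl
    | succ j => simp [LC.liftSub, rename_rename, upr]

theorem subst_subst (t : LC) : ∀ (σ σ' : ℕ → LC),
    (t.subst σ).subst σ' = t.subst (fun i => (σ i).subst σ') := by
  induction t with
  | var i => intros; rfl
  | app u v ihu ihv => intro r s; simp [LC.subst, ihu, ihv]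
  | cc => intros; rfl
  | abs u ih =>
    intro σ r
    simp only [LC.subst, ih]
    congr 2
    funext i
    cases i with
    | zero => rfl
    | succ j => simp [LC.liftSub, subst_rename, rename_subst]

theorem liftSub_var : LC.liftSub LC.var = LC.var := by
  funext i
  cases i <;> rfl

theorem subst_var (t : LC) : t.subst LC.var = t := by
  induction t with
  | var i => rfl
  | app u v ihu ihv => simp [LC.subst, ihu, ihv]
  | cc => rfl
  | abs u ih => simp [LC.subst, liftSub_var, ih]

theorem subst_lift_subst0 (u v : LC) (σ : ℕ → LC) :
    (u.subst (LC.liftSub σ)).subst0 v = u.subst (cons v σ) := by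
  rw [subst0_eq, subst_subst]
  congr 1
  funext i
  cases i with
  | zero => rfl
  | succ j =>
    simp only [LC.liftSub, subst_rename, cons]
    exact subst_var _

theorem subst0_subst (u v : LC) (σ : ℕ → LC) :
    (u.subst0 v).subst σ = (u.subst (LC.liftSub σ)).subst0 (v.subst σ) := by
  rw [subst_lift_subst0, subst0_eq, subst_subst]
  congr 1
  funext i
  cases i <;> rfl

theorem appSpine_subst (ts : List LC) : ∀ (t : LC) (σ : ℕ → LC),
    (LC.appSpine t ts).subst σ = LC.appSpine (t.subst σ) (ts.map (LC.subst σ)) := by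
  induction ts with
  | nil => intros; rfl
  | cons a ts ih =>
    intro t σ
    exact ih (LC.app t a) σ

theorem lift_shift (t : LC) (σ : ℕ → LC) :
    (t.rename (· + 1)).subst (LC.liftSub σ) = (t.subst σ).rename (· + 1) := by
  rw [subst_rename, rename_subst]
  rfl

theorem hcstep_subst {t t' : LC} (h : LC.HCStep t t') (σ : ℕ → LC) :
    LC.HCStep (t.subst σ) (t'.subst σ) := by
  cases h with
  | beta u t ts =>
    rw [appSpine_subst, appSpine_subst, subst0_subst]
    exact LC.HCStep.beta _ _ _
  | cred t ts =>
    rw [appSpine_subst]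
    have := LC.HCStep.cred (t.subst σ) (ts.map (LC.subst σ))
    have e : (LC.app t (LC.abs (LC.appSpine (LC.var 0) (ts.map (LC.rename (· + 1)))))).subst σ
        = LC.app (t.subst σ) (LC.abs (LC.appSpine (LC.var 0)
            ((ts.map (LC.subst σ)).map (LC.rename (· + 1))))) := by
      simp only [LC.subst, appSpine_subst, List.map_map]
      congr 3
      apply List.map_congr_left
      intro a _
      exact lift_shift a σ
    rw [e]
    exact this

/- Free variables. -/

def up (D : ℕ → Prop) : ℕ → Prop
  | 0 => True
  | j+1 => D j

def FVin : (ℕ → Prop) → LC → Prop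
  | D, .var i => D i
  | D, .app u v => FVin D u ∧ FVin D v
  | D, .abs u => FVin (up D) u
  | _, .cc => True

theorem fv_rename (t : LC) : ∀ (D D' : ℕ → Prop) (r : ℕ → ℕ), FVin D t →
    (∀ i, D i → D' (r i)) → FVin D' (t.rename r) := by
  induction t with
  | var i => intro D D' r h hr; exact hr i h
  | app u v ihu ihv => intro D D' r h hr; exact ⟨ihu _ _ _ h.1 hr, ihv _ _ _ h.2 hr⟩
  | cc => intros; trivial
  | abs u ih =>
    intro D D' r h hr
    rw [rename_abs]
    refine ih (up D) (up D') _ h ?_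
    intro i hi
    cases i with
    | zero => trivial
    | succ j => exact hr j hi

theorem fv_subst (t : LC) : ∀ (D D' : ℕ → Prop) (σ : ℕ → LC), FVin D t →
    (∀ i, D i → FVin D' (σ i)) → FVin D' (t.subst σ) := by
  induction t with
  | var i => intro D D' r h hr; exact hr i h
  | app u v ihu ihv => intro D D' r h hr; exact ⟨ihu _ _ _ h.1 hr, ihv _ _ _ h.2 hr⟩
  | cc => intros; trivial
  | abs u ih =>
    intro D D' r h hr
    refine ih (up D) (up D') _ h ?_
    intro i hi
    cases i with
    | zero => trivial
    | succ j => exact fv_rename _ _ _ _ (hr j hi) (fun i h => h)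

theorem fv_mono {t : LC} {D D' : ℕ → Prop} (h : FVin D t) (hD : ∀ i, D i → D' i) :
    FVin D' t := by
  have := fv_subst t D D' LC.var h hD
  rwa [subst_var] at this

theorem subst_agree (t : LC) : ∀ (D : ℕ → Prop) (σ σ' : ℕ → LC), FVin D t →
    (∀ i, D i → σ i = σ' i) → t.subst σ = t.subst σ' := by
  induction t with
  | var i => intro D σ σ' h hr; exact hr i h
  | app u v ihu ihv =>
    intro D σ σ' h hr
    simp only [LC.subst]
    rw [ihu D σ σ' h.1 hr, ihv D σ σ' h.2 hr]
  | cc => intros; rfl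
  | abs u ih =>
    intro D σ σ' h hr
    simp only [LC.subst]
    rw [ih (up D) (LC.liftSub σ) (LC.liftSub σ') h]
    intro i hi
    cases i with
    | zero => rfl
    | succ j => simp only [LC.liftSub]; rw [hr j hi]

theorem fv_subst0 {u v : LC} {D : ℕ → Prop} (hu : FVin (up D) u) (hv : FVin D v) :
    FVin D (u.subst0 v) := by
  rw [subst0_eq]
  refine fv_subst _ _ _ _ hu ?_
  intro i hi
  cases i with
  | zero => exact hv
  | succ j => exact hi

theorem fv_spine {D : ℕ → Prop} (ts : List LC) : ∀ (t : LC),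
    FVin D (LC.appSpine t ts) ↔ FVin D t ∧ ∀ a ∈ ts, FVin D a := by
  induction ts with
  | nil => intro t; simp [LC.appSpine]
  | cons b ts ih =>
    intro t
    have := ih (LC.app t b)
    simp only [LC.appSpine, List.foldl_cons] at this ⊢
    rw [this]
    simp [FVin, and_assoc]

theorem fv_hcstep {t t' : LC} (h : LC.HCStep t t') {D : ℕ → Prop} (ht : FVin D t) :
    FVin D t' := by
  cases h with
  | beta u t ts =>
    rw [fv_spine] at ht ⊢
    exact ⟨fv_subst0 ht.1.1 ht.1.2, ht.2⟩
  | cred t ts =>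
    rw [fv_spine] at ht
    refine ⟨ht.1.2, ?_⟩
    show FVin (up D) _
    rw [fv_spine]
    refine ⟨trivial, ?_⟩
    intro a ha
    obtain ⟨b, hb, rfl⟩ := List.mem_map.1 ha
    exact fv_rename _ _ _ _ (ht.2 b hb) (fun i h => h)

theorem fv_beta {t t' : LC} (h : LC.Beta t t') : ∀ {D : ℕ → Prop}, FVin D t → FVin D t' := by
  induction h with
  | beta u v => intro D h; exact fv_subst0 h.1 h.2
  | appL v _ ih => intro D h; exact ⟨ih h.1, h.2⟩
  | appR u _ ih => intro D h; exact ⟨h.1, ih h.2⟩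
  | abs _ ih => intro D h; exact ih (D := up D) h

theorem fv_bounded (t : LC) : ∃ M, FVin (fun i => i < M) t := by
  induction t with
  | var i => exact ⟨i+1, Nat.lt_succ_self i⟩
  | app u v ihu ihv =>
    obtain ⟨M, hM⟩ := ihu
    obtain ⟨M', hM'⟩ := ihv
    exact ⟨M + M', fv_mono hM (fun i h => by omega), fv_mono hM' (fun i h => by omega)⟩
  | cc => exact ⟨0, trivial⟩
  | abs u ih =>
    obtain ⟨M, hM⟩ := ih
    refine ⟨M, fv_mono (D' := up (fun i => i < M)) hM ?_⟩
    intro i hi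
    cases i with
    | zero => trivial
    | succ j => exact Nat.lt_of_succ_lt hi

theorem fv_typed {S : Sig} {E : Set (FOTerm S × FOTerm S)} {Γ : List (Form S)} {t : LC}
    {A : Form S} (h : M2 S E Γ t A) : FVin (fun i => i < Γ.length) t := by
  induction h with
  | ccAx => trivial
  | var h => exact (List.getElem?_eq_some_iff.1 h).1
  | absI _ ih =>
    refine fv_mono (D' := up _) ih ?_
    intro i hi
    cases i with
    | zero => trivial
    | succ j => simpa [up] using hi
  | appE _ _ ihu ihv => exact ⟨ihu, ihv⟩
  | fallI _ ih => simpa using ih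
  | fallE _ _ ih => exact ih
  | pallI _ ih => simpa using ih
  | pallE _ _ ih => exact ih
  | eqE _ _ ih => exact ih
  | pallIC _ ih => simpa using ih
  | pallEC _ _ _ ih => exact ih

/- Part 2: recognizing Church integers. -/

abbrev BStar := Relation.ReflTransGen LC.Beta

theorem rename_eq_subst (t : LC) (r : ℕ → ℕ) :
    t.rename r = t.subst (fun i => LC.var (r i)) := by
  have := subst_rename t r LC.var
  rw [subst_var] at this
  exact this

theorem subst0_rename (u v : LC) (r : ℕ → ℕ) :
    (u.subst0 v).rename r = (u.rename (upr r)).subst0 (v.rename r) := by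
  rw [subst0_eq, subst0_eq, rename_subst, subst_rename]
  congr 1
  funext i
  cases i <;> rfl

theorem beta_reflect (t : LC) : ∀ (r : ℕ → ℕ) (v : LC), LC.Beta (t.rename r) v →
    ∃ t', LC.Beta t t' ∧ v = t'.rename r := by
  induction t with
  | var i => intro r v h; cases h
  | cc => intro r v h; cases h
  | abs u ih =>
    intro r v h
    rw [rename_abs] at h
    cases h with
    | abs h =>
      obtain ⟨t', ht', rfl⟩ := ih _ _ h
      exact ⟨_, LC.Beta.abs ht', (rename_abs _ _).symm⟩
  | app u w ihu ihw =>
    intro r v h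
    simp only [LC.rename] at h
    generalize hu : u.rename r = u' at h
    generalize hw : w.rename r = w' at h
    cases h with
    | beta a b =>
      cases u with
      | var i => cases hu
      | app _ _ => cases hu
      | cc => cases hu
      | abs u0 =>
        rw [rename_abs] at hu
        injection hu with hu
        subst hu
        subst hw
        exact ⟨_, LC.Beta.beta _ _, (subst0_rename _ _ _).symm⟩
    | appL _ h =>
      subst hu
      subst hw
      obtain ⟨t', ht', rfl⟩ := ihu _ _ h
      exact ⟨_, LC.Beta.appL _ ht', rfl⟩
    | appR _ h =>
      subst hu
      subst hw
      obtain ⟨t', ht', rfl⟩ := ihw _ _ h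
      exact ⟨_, LC.Beta.appR _ ht', rfl⟩

theorem bstar_reflect {t : LC} {r : ℕ → ℕ} {v : LC} (h : BStar (t.rename r) v) :
    ∃ t', BStar t t' ∧ v = t'.rename r := by
  induction h with
  | refl => exact ⟨t, .refl, rfl⟩
  | tail _ h ih =>
    obtain ⟨t', ht', rfl⟩ := ih
    obtain ⟨t'', ht'', rfl⟩ := beta_reflect _ _ _ h
    exact ⟨t'', ht'.tail ht'', rfl⟩

theorem bstar_app {u v : LC} {g : ℕ} (h : BStar (.app u (.var g)) v) :
    (∃ u', v = .app u' (.var g)) ∨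
      ∃ w, BStar u (.abs w) ∧ BStar (w.subst0 (.var g)) v := by
  have h' : (∃ u', v = .app u' (.var g) ∧ BStar u u') ∨
      ∃ w, BStar u (.abs w) ∧ BStar (w.subst0 (.var g)) v := by
    induction h with
    | refl => exact Or.inl ⟨u, rfl, .refl⟩
    | tail _ h ih =>
      rcases ih with ⟨u', rfl, hu'⟩ | ⟨w, hw, hv⟩
      · cases h with
        | beta a b => exact Or.inr ⟨_, hu', .refl⟩
        | appL _ h => exact Or.inl ⟨_, rfl, hu'.tail h⟩
        | appR _ h => cases h
      · exact Or.inr ⟨w, hw, hv.tail h⟩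
  rcases h' with ⟨u', h, _⟩ | h
  · exact Or.inl ⟨u', h⟩
  · exact Or.inr h

def insv (x : ℕ) : ℕ → ℕ
  | 0 => x
  | j+1 => j

theorem subst0_var (u : LC) (x : ℕ) : u.subst0 (.var x) = u.rename (insv x) := by
  rw [subst0_eq, rename_eq_subst]
  congr 1
  funext i
  cases i <;> rfl

theorem bstar_abs {u v : LC} (h : BStar u v) : BStar (.abs u) (.abs v) := by
  induction h with
  | refl => exact .refl
  | tail _ h ih => exact ih.tail (LC.Beta.abs h)

theorem bstar_appR {t u v : LC} (h : BStar u v) : BStar (.app t u) (.app t v) := by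
  induction h with
  | refl => exact .refl
  | tail _ h ih => exact ih.tail (LC.Beta.appR _ h)

theorem fv_bstar {t t' : LC} (h : BStar t t') {D : ℕ → Prop} (ht : FVin D t) : FVin D t' := by
  induction h with
  | refl => exact ht
  | tail _ h ih => exact fv_beta h ih

theorem iter_rename (M : ℕ) (r : ℕ → ℕ) (h0 : r 0 = M) (h1 : r 1 = M + 1)
    (h2 : ∀ i, r (i+2) = i) (n : ℕ) : ∀ (v : LC), FVin (up (up (fun i => i < M))) v →
    LC.iterApp (.var M) n (.var (M+1)) = v.rename r → v = LC.iterApp (.var 0) n (.var 1) := by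
  have key : ∀ i, up (up (fun i => i < M)) i → (r i = M → i = 0) ∧ (r i = M + 1 → i = 1) := by
    intro i hi
    match i, hi with
    | 0, _ => exact ⟨fun _ => rfl, fun h => by omega⟩
    | 1, _ => exact ⟨fun h => by omega, fun _ => rfl⟩
    | j+2, hi =>
      have : j < M := hi
      have := h2 j
      exact ⟨fun h => by omega, fun h => by omega⟩
  induction n with
  | zero =>
    intro v hv h
    cases v with
    | var i =>
      simp only [LC.iterApp, LC.rename, LC.var.injEq] at h
      rw [(key i hv).2 h.symm]
      rfl
    | app _ _ => simp [LC.iterApp, LC.rename] at h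
    | abs _ => simp [LC.iterApp, LC.rename] at h
    | cc => simp [LC.iterApp, LC.rename] at h
  | succ n ih =>
    intro v hv h
    cases v with
    | var i => simp [LC.iterApp, LC.rename] at h
    | abs _ => simp [LC.iterApp, LC.rename] at h
    | cc => simp [LC.iterApp, LC.rename] at h
    | app a b =>
      simp only [LC.iterApp, LC.rename, LC.app.injEq] at h ⊢
      refine ⟨?_, ih b hv.2 h.2⟩
      have h := h.1
      cases a with
      | var i =>
        simp only [LC.rename, LC.var.injEq] at h
        rw [(key i hv.1).1 h.symm]
      | app _ _ => simp [LC.rename] at h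
      | abs _ => simp [LC.rename] at h
      | cc => simp [LC.rename] at h

theorem bstar_betaEq {u v : LC} (h : BStar u v) : LC.BetaEq u v := by
  induction h with
  | refl => exact Relation.EqvGen.refl _
  | tail _ h ih => exact Relation.EqvGen.trans _ _ _ ih (Relation.EqvGen.rel _ _ h)

theorem church_of_bstar {τ : LC} {M n : ℕ} (hM : FVin (fun i => i < M) τ)
    (h : BStar (.app (.app τ (.var (M+1))) (.var M)) (LC.iterApp (.var M) n (.var (M+1)))) :
    LC.BetaEq τ (LC.church n) := by
  rcases bstar_app h with ⟨u', hu'⟩ | ⟨w, hw, hv⟩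
  · exfalso
    cases n with
    | zero => simp [LC.iterApp] at hu'
    | succ n =>
      cases n with
      | zero => simp [LC.iterApp] at hu'
      | succ n => simp [LC.iterApp] at hu'
  rcases bstar_app hw with ⟨u', hu'⟩ | ⟨w', hw', hv'⟩
  · cases hu'
  rw [subst0_var] at hv'
  obtain ⟨w1, hw1, e1⟩ := bstar_reflect hv'
  cases w1 with
  | var i => simp [LC.rename] at e1
  | app _ _ => simp [LC.rename] at e1
  | cc => simp [LC.rename] at e1
  | abs w2 =>
    rw [rename_abs] at e1
    injection e1 with e1
    subst e1
    rw [subst0_var, rename_rename] at hv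
    obtain ⟨v2, hv2, e2⟩ := bstar_reflect hv
    have hτ : BStar τ (.abs (.abs v2)) :=
      hw'.trans ((bstar_abs hw1).trans (bstar_abs (bstar_abs hv2)))
    have hfv : FVin (up (up (fun i => i < M))) v2 := fv_bstar hτ hM
    have e3 := iter_rename M (fun i => insv M (upr (insv (M + 1)) i)) rfl rfl (fun i => rfl) n v2 hfv e2
    subst e3
    exact bstar_betaEq hτ

/- Part 3: realizability model. -/

section Sem

variable {S : Sig} (I : (f : S.Fn) → (Fin (S.arFn f) → ℕ) → ℕ)

def ev (ρ : ℕ → ℕ) : FOTerm S → ℕ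
  | .var i => ρ i
  | .fn f ts => I f (fun i => ev ρ (ts i))

def ncons {α : Type} (x : α) (ρ : ℕ → α) : ℕ → α
  | 0 => x
  | j+1 => ρ j

theorem ev_rename (r : ℕ → ℕ) (ρ : ℕ → ℕ) (t : FOTerm S) :
    ev I ρ (t.rename r) = ev I (fun i => ρ (r i)) t := by
  induction t with
  | var i => rfl
  | fn f ts ih => simp only [FOTerm.rename, ev, ih]

theorem ev_subst (σ : ℕ → FOTerm S) (ρ : ℕ → ℕ) (t : FOTerm S) :
    ev I ρ (t.subst σ) = ev I (fun i => ev I ρ (σ i)) t := by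
  induction t with
  | var i => rfl
  | fn f ts ih => simp only [FOTerm.subst, ev, ih]

variable (pole : LC → Prop)

def orth (P : Set (List LC)) : Set LC := {t | ∀ π ∈ P, pole (LC.appSpine t π)}

def Sat (F : Set LC) : Prop := ∀ u t ts, LC.appSpine (u.subst0 t) ts ∈ F →
  LC.appSpine (.app (.abs u) t) ts ∈ F

def Adm : PK → (List ℕ → Set LC) → Prop
  | .pl, F => ∀ l, Sat (F l)
  | .sp, F => ∀ l, ∃ P, F l = orth pole P

abbrev Val := PK → ℕ → List ℕ → Set LC

def push (k : PK) (F : List ℕ → Set LC) (V : Val) : Val :=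
  fun k' => if k' = k then ncons F (V k') else V k'

def sem : Form S → (ℕ → ℕ) → Val → Set LC
  | .bot, _, _ => {t | pole t}
  | .pr _ _, _, _ => Set.univ
  | .pvar k X ts, ρ, V => V k X (ts.map (ev I ρ))
  | .arr A B, ρ, V => {t | ∀ u ∈ sem A ρ V, LC.app t u ∈ sem B ρ V}
  | .fall A, ρ, V => {t | ∀ x : ℕ, t ∈ sem A (ncons x ρ) V}
  | .pall k A, ρ, V => {t | ∀ F, Adm pole k F → t ∈ sem A ρ (push k F V)}

theorem sem_substFO (A : Form S) : ∀ (σ : ℕ → FOTerm S) (ρ : ℕ → ℕ) (V : Val),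
    sem I pole (A.substFO σ) ρ V = sem I pole A (fun i => ev I ρ (σ i)) V := by
  induction A with
  | bot => intros; rfl
  | pr P ts => intros; rfl
  | pvar k X ts =>
    intro σ ρ V
    simp only [Form.substFO, sem, List.map_map]
    congr 1
    apply List.map_congr_left
    intro a _
    exact ev_subst I σ ρ a
  | arr A B ihA ihB =>
    intro σ ρ V
    simp only [Form.substFO, sem, ihA, ihB]
  | fall A ih =>
    intro σ ρ V
    simp only [Form.substFO, sem, ih]
    congr! 6 with t x
    rename_i i
    cases i with
    | zero => rfl
    | succ j => simp only [FOTerm.liftSub, ncons, ev_rename]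
  | pall k A ih =>
    intro σ ρ V
    simp only [Form.substFO, sem, ih]

def renV (k : PK) (r : ℕ → ℕ) (V : Val) : Val :=
  fun k' X => V k' (if k' = k then r X else X)

theorem sem_rename2 (k : PK) (A : Form S) : ∀ (r : ℕ → ℕ) (ρ : ℕ → ℕ) (V : Val),
    sem I pole (A.rename2 k r) ρ V = sem I pole A ρ (renV k r V) := by
  induction A with
  | bot => intros; rfl
  | pr P ts => intros; rfl
  | pvar k X ts => intros; rfl
  | arr A B ihA ihB =>
    intro σ ρ V
    simp only [Form.rename2, sem, ihA, ihB]
  | fall A ih =>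
    intro σ ρ V
    simp only [Form.rename2, sem, ih]
  | pall k' A ih =>
    intro r ρ V
    simp only [Form.rename2, sem, ih]
    have key : ∀ F, renV k (if k' = k then
        (fun i => match i with | 0 => 0 | j+1 => r j + 1) else r) (push k' F V)
        = push k' F (renV k r V) := by
      intro F
      funext k'' X
      by_cases h1 : k'' = k <;> by_cases h2 : k' = k
      · subst h1; subst h2
        cases X <;> simp [renV, push, ncons]
      · subst h1
        have : ¬ k'' = k' := fun h => h2 h.symm
        simp [renV, push, this, h2]
      · subst h2
        simp [renV, push, h1]
      · simp only [renV, push, h1, h2, if_false]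
        by_cases h3 : k'' = k'
        · subst h3
          cases X <;> simp [ncons, renV, h1]
        · simp [h3, renV, h1]
    simp only [key]

def insV (k : PK) (n : ℕ) (F : List ℕ → Set LC) (V : Val) : Val :=
  fun k' X => if k' = k then
    (if X = n then F else if n < X then V k' (X - 1) else V k' X) else V k' X

theorem sem_inst2 (k : PK) (G : Form S) (A : Form S) :
    ∀ (d : ℕ) (e : PK → ℕ) (ρ : ℕ → ℕ) (V : Val),
    sem I pole (Form.inst2 k G d e A) ρ V =
      sem I pole A ρ (insV k (e k) (fun l => sem I pole G
        (fun i => if h : i < l.length then l.get ⟨i, h⟩ else ρ (i - l.length + d))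
        (fun k' X => V k' (X + e k'))) V) := by
  induction A with
  | bot => intros; rfl
  | pr P ts => intros; rfl
  | pvar k' X ts =>
    intro d e ρ V
    simp only [Form.inst2]
    by_cases h : k' = k ∧ X = e k
    · rw [if_pos h]
      obtain ⟨rfl, rfl⟩ := h
      rw [sem_substFO, sem_rename2, sem_rename2]
      simp only [sem, insV, if_true]
      congr 1
      · funext i
        simp only [List.length_map]
        by_cases hi : i < ts.length
        · simp [hi]
        · simp [hi, ev]
      · funext k'' X
        cases k'' <;> simp [renV]
    · rw [if_neg h]
      simp only [sem, insV]
      by_cases hk : k' = k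
      · subst hk
        have hX : ¬ X = e k' := fun hX => h ⟨rfl, hX⟩
        by_cases h3 : e k' < X <;> simp [hX, h3]
      · simp [hk]
  | arr A B ihA ihB =>
    intro d e ρ V
    simp only [Form.inst2, sem, ihA, ihB]
  | fall A ih =>
    intro d e ρ V
    simp only [Form.inst2, sem, ih]
    have : ∀ (x : ℕ) (l : List ℕ), (fun i => if h : i < l.length then l.get ⟨i, h⟩
        else (ncons x ρ) (i - l.length + (d+1))) =
        (fun i => if h : i < l.length then l.get ⟨i, h⟩ else ρ (i - l.length + d)) := by
      intro x l
      rfl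
    simp only [this]
  | pall k' A ih =>
    intro d e ρ V
    simp only [Form.inst2, sem, ih]
    have key : ∀ H F, insV k (Form.bump e k' k) F (push k' H V)
        = push k' H (insV k (e k) F V) := by
      intro H F
      funext k'' X
      by_cases h1 : k'' = k <;> by_cases h2 : k = k'
      · subst h1; subst h2
        cases X with
        | zero => simp [insV, push, ncons, Form.bump]
        | succ X =>
          simp only [insV, push, ncons, Form.bump, if_true, Nat.add_right_cancel_iff,
            Nat.add_lt_add_iff_right]
          by_cases h3 : X = e k''
          · simp [h3]
          · by_cases h4 : e k'' < X
            · obtain ⟨Y, rfl⟩ : ∃ Y, X = Y + 1 := ⟨X - 1, by omega⟩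
              simp [h3, h4]
            · simp [h3, h4]
      · subst h1
        simp [insV, push, Form.bump, h2]
      · subst h2
        simp [insV, push, h1]
      · by_cases h3 : k'' = k'
        · simp only [insV, push, h3]
          have : ¬ k' = k := fun h => h2 h.symm
          cases X <;> simp [this, ncons, insV]
        · simp [insV, push, h3, h1]
    have key2 : ∀ H, (fun k'' X => push k' H V k'' (X + Form.bump e k' k'')) =
        (fun k'' X => V k'' (X + e k'')) := by
      intro H
      funext k'' X
      by_cases h : k'' = k'
      · simp only [push, Form.bump, h, if_true]
        rfl
      · simp [push, Form.bump, h]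
    simp only [key, key2]

def AdmV (V : Val) : Prop := ∀ k X, Adm pole k (V k X)

variable {pole}

theorem admV_push {k : PK} {F : List ℕ → Set LC} {V : Val} (hF : Adm pole k F)
    (hV : AdmV pole V) : AdmV pole (push k F V) := by
  intro k' X
  by_cases h : k' = k
  · subst h
    cases X with
    | zero => simpa [push, ncons] using hF
    | succ X => simpa [push, ncons] using hV k' X
  · simpa [push, h] using hV k' X



theorem spine_append (t : LC) (l l' : List LC) :
    LC.appSpine (LC.appSpine t l) l' = LC.appSpine t (l ++ l') := by
  simp [LC.appSpine]

theorem sat_orth (hp : ∀ t t', LC.HCStep t t' → pole t' → pole t) (P : Set (List LC)) : Sat (orth pole P) := by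
  intro u t ts h π hπ
  have := h π hπ
  rw [spine_append] at this ⊢
  exact hp _ _ (LC.HCStep.beta u t _) this

theorem sat_sem (hp : ∀ t t', LC.HCStep t t' → pole t' → pole t) (A : Form S) : ∀ (ρ : ℕ → ℕ) (V : Val), AdmV pole V →
    Sat (sem I pole A ρ V) := by
  induction A with
  | bot =>
    intro ρ V hV u t ts h
    exact hp _ _ (LC.HCStep.beta u t ts) h
  | pr P ts => intro ρ V hV u t ts h; trivial
  | pvar k X ts =>
    intro ρ V hV
    have := hV k X
    cases k with
    | pl => exact this _
    | sp =>
      obtain ⟨P, hP⟩ := this (ts.map (ev I ρ))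
      simp only [sem, hP]
      exact sat_orth hp P
  | arr A B ihA ihB =>
    intro ρ V hV u t ts h v hv
    have h1 := h v hv
    have := ihB ρ V hV u t (ts ++ [v])
    rw [← spine_append, ← spine_append] at this
    exact this h1
  | fall A ih =>
    intro ρ V hV u t ts h x
    exact ih _ V hV u t ts (h x)
  | pall k A ih =>
    intro ρ V hV u t ts h F hF
    exact ih _ _ (admV_push hF hV) u t ts (h F hF)

theorem ends_orth {A : Form S} (hA : EndsClassical A) : ∀ (ρ : ℕ → ℕ) (V : Val), AdmV pole V →
    ∃ P, sem I pole A ρ V = orth pole P := by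
  induction hA with
  | bot =>
    intro ρ V hV
    refine ⟨{[]}, ?_⟩
    ext t
    simp [sem, orth, LC.appSpine]
  | cvar X ts =>
    intro ρ V hV
    exact hV .sp X _
  | arr A _ ih =>
    intro ρ V hV
    obtain ⟨P, hP⟩ := ih ρ V hV
    refine ⟨{π | ∃ a ∈ sem I pole A ρ V, ∃ π' ∈ P, π = a :: π'}, ?_⟩
    ext t
    simp only [sem, hP]
    constructor
    · rintro h π ⟨a, ha, π', hπ', rfl⟩
      exact h a ha π' hπ'
    · intro h a ha π' hπ'
      exact h (a :: π') ⟨a, ha, π', hπ', rfl⟩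
  | fall _ ih =>
    intro ρ V hV
    choose P hP using fun x => ih (ncons x ρ) V hV
    refine ⟨⋃ x, P x, ?_⟩
    ext t
    simp only [sem, hP, orth, Set.mem_iUnion, Set.mem_ofPred_eq]
    constructor
    · rintro h π ⟨x, hx⟩
      exact h x π hx
    · intro h x π hx
      exact h π ⟨x, hx⟩
  | pall k _ ih =>
    intro ρ V hV
    choose P hP using fun (F : {F // Adm pole k F}) => ih ρ (push k F.1 V) (admV_push F.2 hV)
    refine ⟨⋃ x, P x, ?_⟩
    ext t
    simp only [sem, orth, Set.mem_iUnion, Set.mem_ofPred_eq]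
    constructor
    · rintro h π ⟨x, hx⟩
      have := h x.1 x.2
      rw [hP x] at this
      exact this π hx
    · intro h F hF
      rw [hP ⟨F, hF⟩]
      intro π hx
      exact h π ⟨_, hx⟩

theorem renV_push (k : PK) (F : List ℕ → Set LC) (V : Val) :
    renV k (· + 1) (push k F V) = V := by
  funext k' X
  by_cases h : k' = k
  · subst h; simp [renV, push, ncons]
  · simp [renV, push, h]

theorem insV_zero (k : PK) (F : List ℕ → Set LC) (V : Val) :
    insV k 0 F V = push k F V := by
  funext k' X
  by_cases h : k' = k
  · subst h; cases X <;> simp [insV, push, ncons]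
  · simp [insV, push, h]

theorem sem_substFO0 (A : Form S) (u : FOTerm S) (ρ : ℕ → ℕ) (V : Val) :
    sem I pole (A.substFO0 u) ρ V = sem I pole A (ncons (ev I ρ u) ρ) V := by
  rw [Form.substFO0, sem_substFO]
  congr 1
  funext i
  cases i <;> rfl

theorem sem_inst2_0 (k : PK) (A G : Form S) (ρ : ℕ → ℕ) (V : Val) :
    sem I pole (Form.inst2_0 k A G) ρ V = sem I pole A ρ (push k (fun l => sem I pole G
        (fun i => if h : i < l.length then l.get ⟨i, h⟩ else ρ (i - l.length)) V) V) := by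
  rw [Form.inst2_0, sem_inst2, insV_zero]
  rfl

theorem adequacy (hp : ∀ t t', LC.HCStep t t' → pole t' → pole t)
    {E : Set (FOTerm S × FOTerm S)} (hE : ∀ u v, EqE E u v → ∀ ρ, ev I ρ u = ev I ρ v)
    {Γ : List (Form S)} {t : LC} {A : Form S} (h : M2 S E Γ t A) :
    ∀ (ρ : ℕ → ℕ) (V : Val), AdmV pole V → ∀ σ : ℕ → LC,
      (∀ i B, Γ[i]? = some B → σ i ∈ sem I pole B ρ V) → t.subst σ ∈ sem I pole A ρ V := by
  induction h with
  | ccAx =>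
    intro ρ V hV σ hσ F hF u hu
    obtain ⟨P, hP⟩ := hF []
    have e : ∀ ρ, sem I pole (Form.pvar PK.sp 0 [] : Form S) ρ (push .sp F V) = orth pole P := by
      intro ρ
      rw [← hP]
      simp [sem, push, ncons]
    rw [e]
    intro π hπ
    refine hp _ _ (LC.HCStep.cred u π) ?_
    refine hu _ ?_
    intro v hv
    rw [e] at hv
    refine hp _ _ (LC.HCStep.beta _ v []) ?_
    have e2 : (LC.appSpine (LC.var 0) (π.map (LC.rename (· + 1)))).subst0 v
        = LC.appSpine v π := by
      rw [subst0_eq, appSpine_subst, List.map_map]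
      congr 1
      conv_rhs => rw [← List.map_id π]
      apply List.map_congr_left
      intro a _
      simp only [Function.comp, subst_rename, id]
      exact subst_var a
    rw [e2]
    exact hv π hπ
  | var h =>
    intro ρ V hV σ hσ
    exact hσ _ _ h
  | absI _ ih =>
    intro ρ V hV σ hσ u hu
    refine sat_sem I hp _ ρ V hV _ u [] ?_
    rw [subst_lift_subst0]
    refine ih ρ V hV _ ?_
    intro i B hi
    cases i with
    | zero =>
      simp only [List.getElem?_cons_zero, Option.some.injEq] at hi
      subst hi
      exact hu
    | succ i => exact hσ i B (by simpa using hi)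
  | appE _ _ ihu ihv =>
    intro ρ V hV σ hσ
    exact ihu ρ V hV σ hσ _ (ihv ρ V hV σ hσ)
  | fallI _ ih =>
    intro ρ V hV σ hσ x
    refine ih _ V hV σ ?_
    intro i B hi
    rw [List.getElem?_map] at hi
    obtain ⟨B', hB', rfl⟩ := Option.map_eq_some_iff.1 hi
    rw [Form.shiftFO, sem_substFO]
    exact hσ i B' hB'
  | fallE u _ ih =>
    intro ρ V hV σ hσ
    rw [sem_substFO0]
    exact ih ρ V hV σ hσ _
  | pallI _ ih =>
    intro ρ V hV σ hσ F hF
    refine ih _ _ (admV_push hF hV) σ ?_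
    intro i B hi
    rw [List.getElem?_map] at hi
    obtain ⟨B', hB', rfl⟩ := Option.map_eq_some_iff.1 hi
    rw [sem_rename2, renV_push]
    exact hσ i B' hB'
  | pallE G _ ih =>
    intro ρ V hV σ hσ
    rw [sem_inst2_0]
    exact ih ρ V hV σ hσ _ (fun l => sat_sem I hp G _ V hV)
  | eqE _ huv ih =>
    intro ρ V hV σ hσ
    have := ih ρ V hV σ hσ
    rw [sem_substFO0] at this ⊢
    rwa [← hE _ _ huv]
  | pallIC _ ih =>
    intro ρ V hV σ hσ F hF
    refine ih _ _ (admV_push hF hV) σ ?_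
    intro i B hi
    rw [List.getElem?_map] at hi
    obtain ⟨B', hB', rfl⟩ := Option.map_eq_some_iff.1 hi
    rw [sem_rename2, renV_push]
    exact hσ i B' hB'
  | pallEC G hG _ ih =>
    intro ρ V hV σ hσ
    rw [sem_inst2_0]
    exact ih ρ V hV σ hσ _ (fun l => ends_orth I hG _ V hV)

end Sem

/- Part 4: integers. -/

def Inat : (f : NatSig.Fn) → (Fin (NatSig.arFn f) → ℕ) → ℕ
  | .zero, _ => 0
  | .succ, x => x ⟨0, Nat.one_pos⟩ + 1

theorem ev_numT (ρ : ℕ → ℕ) (n : ℕ) : ev Inat ρ (numT n) = n := by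
  induction n with
  | zero => rfl
  | succ n ih =>
    show ev Inat ρ (numT n) + 1 = n + 1
    rw [ih]

theorem ground (ρ : ℕ → ℕ) (t : FOTerm NatSig) :
    t.subst (fun i => numT (ρ i)) = numT (ev Inat ρ t) := by
  induction t with
  | var i => rfl
  | fn f ts ih =>
    cases f with
    | zero =>
      show (FOTerm.fn NatFn.zero _ : FOTerm NatSig) = FOTerm.fn (S := NatSig) NatFn.zero _
      congr 1
      funext i
      exact i.elim0
    | succ =>
      show (FOTerm.fn NatFn.succ _ : FOTerm NatSig) = FOTerm.fn (S := NatSig) NatFn.succ _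
      congr 1
      funext i
      have hi : i = ⟨0, Nat.one_pos⟩ := Subsingleton.elim (α := Fin 1) _ _
      rw [hi]
      exact ih _

theorem numT_inj {E : Set (FOTerm NatSig × FOTerm NatSig)} (hE : Adequate E) (a : ℕ) :
    ∀ b, EqE E (numT a) (numT b) → a = b := by
  induction a with
  | zero =>
    intro b h
    cases b with
    | zero => rfl
    | succ b => exact absurd (Relation.EqvGen.symm _ _ h) (hE.1 _)
  | succ a ih =>
    intro b h
    cases b with
    | zero => exact absurd h (hE.1 _)
    | succ b => rw [ih b (hE.2 _ _ h)]

theorem eqE_sound {E : Set (FOTerm NatSig × FOTerm NatSig)} (hE : Adequate E)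
    (u v : FOTerm NatSig) (h : EqE E u v) : ∀ ρ, ev Inat ρ u = ev Inat ρ v := by
  induction h with
  | rel x y h =>
    intro ρ
    obtain ⟨p, hp, σ, rfl, rfl⟩ := h
    rw [ev_subst, ev_subst]
    apply numT_inj hE
    rw [← ground, ← ground]
    exact Relation.EqvGen.rel _ _ ⟨p, hp, _, rfl, rfl⟩
  | refl x => intro ρ; rfl
  | symm x y _ ih => intro ρ; exact (ih ρ).symm
  | trans x y z _ _ ih1 ih2 => intro ρ; exact (ih1 ρ).trans (ih2 ρ)

/- Part 5: names. -/

def enc : LC → ℕ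
  | .var i => Nat.pair 0 i
  | .app u v => Nat.pair 1 (Nat.pair (enc u) (enc v))
  | .abs u => Nat.pair 2 (enc u)
  | .cc => Nat.pair 3 0

theorem enc_inj (u : LC) : ∀ v, enc u = enc v → u = v := by
  induction u with
  | var i => intro v h; cases v <;> simp [enc, Nat.pair_eq_pair] at h ⊢; exact h
  | app a b iha ihb =>
    intro v h
    cases v <;> simp [enc, Nat.pair_eq_pair] at h ⊢
    exact ⟨iha _ h.1, ihb _ h.2⟩
  | abs a ih =>
    intro v h
    cases v <;> simp [enc, Nat.pair_eq_pair] at h ⊢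
    exact ih _ h
  | cc => intro v h; cases v <;> simp [enc, Nat.pair_eq_pair] at h ⊢

theorem exists_tbl : ∃ tbl : ℕ → LC × LC × ℕ, ∀ x (D : Finset ℕ), ∃ k, k ∉ D ∧ tbl k = x := by
  have : Countable LC := Function.Injective.countable (f := enc) (fun u v h => enc_inj u v h)
  have : Nonempty LC := ⟨.cc⟩
  obtain ⟨h, hh⟩ := exists_surjective_nat (LC × LC × ℕ)
  refine ⟨fun k => h (Nat.unpair k).1, ?_⟩
  intro x D
  obtain ⟨a, ha⟩ := hh x
  refine ⟨Nat.pair a (D.sup id + 1), ?_, by simp [ha]⟩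
  intro hk
  have h1 : Nat.pair a (D.sup id + 1) ≤ D.sup id := Finset.le_sup (f := id) hk
  have h2 := Nat.right_le_pair a (D.sup id + 1)
  omega

/- Part 6: the symbolic machine. -/

inductive St : Type
  | run (D : Finset ℕ) (t : LC) : St
  | call (D : Finset ℕ) (k : ℕ) (π : List LC) : St

section Machine

variable (tbl : ℕ → LC × LC × ℕ) (n : ℕ)

def OkD (D : Finset ℕ) : Prop :=
  0 ∈ D ∧ 1 ∈ D ∧ ∀ k ∈ D, 2 ≤ k →
    FVin (fun i => i ∈ D) (tbl k).1 ∧ FVin (fun i => i ∈ D) (tbl k).2.1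

def Ok : St → Prop
  | .run D t => OkD tbl D ∧ FVin (fun i => i ∈ D) t
  | .call D k π => OkD tbl D ∧ k ∈ D ∧ 2 ≤ k ∧ ∀ p ∈ π, FVin (fun i => i ∈ D) p

inductive Step : St → St → Prop
  | hc {D t t'} : LC.HCStep t t' → Step (.run D t) (.run D t')
  | nu {D a b π k} : k ∉ D → tbl k = (a, b, n) →
      Step (.run D (LC.appSpine (.app (.app (.var 1) a) b) π)) (.call (insert k D) k π)
  | cv {D k π} : 2 ≤ k → Step (.run D (LC.appSpine (.var k) π)) (.call D k π)
  | z {D k π a b} : tbl k = (a, b, 0) → Step (.call D k π) (.run D (LC.appSpine a π))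
  | s {D k π a b j k'} : tbl k = (a, b, j+1) → k' ∉ D → tbl k' = (a, b, j) →
      Step (.call D k π) (.run (insert k' D) (LC.appSpine (.app b (.var k')) π))

variable {tbl n}

theorem fresh_ge {D : Finset ℕ} (h : OkD tbl D) {k : ℕ} (hk : k ∉ D) : 2 ≤ k := by
  by_contra hlt
  have : k = 0 ∨ k = 1 := by omega
  rcases this with rfl | rfl
  · exact hk h.1
  · exact hk h.2.1

theorem fv_insert {D : Finset ℕ} {t : LC} (k : ℕ) (h : FVin (fun i => i ∈ D) t) :
    FVin (fun i => i ∈ insert k D) t :=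
  fv_mono h (fun _ hi => Finset.mem_insert_of_mem hi)

theorem okD_insert {D : Finset ℕ} (h : OkD tbl D) {k : ℕ} {a b : LC} {j : ℕ}
    (hk : tbl k = (a, b, j)) (ha : FVin (fun i => i ∈ D) a) (hb : FVin (fun i => i ∈ D) b) :
    OkD tbl (insert k D) := by
  refine ⟨Finset.mem_insert_of_mem h.1, Finset.mem_insert_of_mem h.2.1, ?_⟩
  intro k' hk' h2
  rcases Finset.mem_insert.1 hk' with rfl | hk'
  · rw [hk]
    exact ⟨fv_insert _ ha, fv_insert _ hb⟩
  · exact ⟨fv_insert _ (h.2.2 k' hk' h2).1, fv_insert _ (h.2.2 k' hk' h2).2⟩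

theorem step_ok {s s' : St} (h : Step tbl n s s') (ho : Ok tbl s) : Ok tbl s' := by
  cases h with
  | hc h => exact ⟨ho.1, fv_hcstep h ho.2⟩
  | nu hk ht =>
    obtain ⟨h1, h2⟩ := ho
    rw [fv_spine] at h2
    obtain ⟨⟨⟨_, ha⟩, hb⟩, hπ⟩ := h2
    exact ⟨okD_insert h1 ht ha hb, Finset.mem_insert_self _ _, fresh_ge h1 hk,
      fun p hp => fv_insert _ (hπ p hp)⟩
  | cv hk =>
    obtain ⟨h1, h2⟩ := ho
    rw [fv_spine] at h2
    exact ⟨h1, h2.1, hk, h2.2⟩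
  | z ht =>
    obtain ⟨h1, h2, h3, h4⟩ := ho
    refine ⟨h1, ?_⟩
    rw [fv_spine]
    have := (h1.2.2 _ h2 h3).1
    rw [ht] at this
    exact ⟨this, h4⟩
  | s ht hk' ht' =>
    obtain ⟨h1, h2, h3, h4⟩ := ho
    have := h1.2.2 _ h2 h3
    rw [ht] at this
    refine ⟨okD_insert h1 ht' this.1 this.2, ?_⟩
    rw [fv_spine]
    exact ⟨⟨fv_insert _ this.2, Finset.mem_insert_self _ _⟩, fun p hp => fv_insert _ (h4 p hp)⟩

variable (tbl n)

def Tr (τ : LC) (s : St) : Prop :=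
  ∃ (G : ℕ → St) (N : ℕ), G 0 = s ∧ (∀ i < N, Step tbl n (G i) (G (i+1))) ∧
    (∀ i ≤ N, Ok tbl (G i)) ∧ ∃ D, G N = .run D (.app (.var 0) τ)

variable {tbl n}

theorem tr_step {τ : LC} {s s' : St} (ho : Ok tbl s) (h : Step tbl n s s')
    (ht : Tr tbl n τ s') : Tr tbl n τ s := by
  obtain ⟨G, N, h0, h1, h2, D, h3⟩ := ht
  refine ⟨ncons s G, N + 1, rfl, ?_, ?_, D, h3⟩
  · intro i hi
    cases i with
    | zero => simpa [ncons, h0] using h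
    | succ i => exact h1 i (by omega)
  · intro i hi
    cases i with
    | zero => exact ho
    | succ i => exact h2 i (by omega)

variable (tbl n)

def Wins (s : St) : Prop := ∃ τ, LC.BetaEq τ (LC.church n) ∧ Tr tbl n τ s

def poleT (t : LC) : Prop := ∀ D, Ok tbl (.run D t) → Wins tbl n (.run D t)

variable {tbl n}

theorem wins_step {s s' : St} (ho : Ok tbl s) (h : Step tbl n s s')
    (ht : Wins tbl n s') : Wins tbl n s := by
  obtain ⟨τ, h1, h2⟩ := ht
  exact ⟨τ, h1, tr_step ho h h2⟩

theorem poleT_hc (t t' : LC) (h : LC.HCStep t t') (ht : poleT tbl n t') : poleT tbl n t := by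
  intro D ho
  have hs : Step tbl n (.run D t) (.run D t') := .hc h
  exact wins_step ho hs (ht D (step_ok hs ho))

theorem name_in (htbl : ∀ x (D : Finset ℕ), ∃ k, k ∉ D ∧ tbl k = x)
    (P : ℕ → Set (List LC)) (a b : LC) (ha : a ∈ orth (poleT tbl n) (P 0))
    (hb : ∀ j, ∀ u ∈ orth (poleT tbl n) (P j), LC.app b u ∈ orth (poleT tbl n) (P (j+1))) :
    ∀ j k π D, π ∈ P j → tbl k = (a, b, j) → Ok tbl (.call D k π) →
      Wins tbl n (.call D k π) := by
  intro j
  induction j with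
  | zero =>
    intro k π D hπ hk ho
    have hs : Step tbl n (.call D k π) (.run D (LC.appSpine a π)) := .z hk
    exact wins_step ho hs (ha π hπ D (step_ok hs ho))
  | succ j ih =>
    intro k π D hπ hk ho
    obtain ⟨k', hk', ht'⟩ := htbl (a, b, j) D
    have hs : Step tbl n (.call D k π) _ := .s hk hk' ht'
    refine wins_step ho hs (hb j (.var k') ?_ π hπ _ (step_ok hs ho))
    intro π' hπ' D' ho'
    have hs' : Step tbl n (.run D' (LC.appSpine (.var k') π')) _ := .cv (fresh_ge ho.1 hk')
    exact wins_step ho' hs' (ih k' π' D' hπ' ht' (step_ok hs' ho'))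

theorem nu_in (htbl : ∀ x (D : Finset ℕ), ∃ k, k ∉ D ∧ tbl k = x)
    (P : ℕ → Set (List LC)) (a b : LC) (ha : a ∈ orth (poleT tbl n) (P 0))
    (hb : ∀ j, ∀ u ∈ orth (poleT tbl n) (P j), LC.app b u ∈ orth (poleT tbl n) (P (j+1))) :
    LC.app (.app (.var 1) a) b ∈ orth (poleT tbl n) (P n) := by
  intro π hπ D ho
  obtain ⟨k, hk, ht⟩ := htbl (a, b, n) D
  have hs : Step tbl n (.run D (LC.appSpine (.app (.app (.var 1) a) b) π)) _ := .nu hk ht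
  exact wins_step ho hs (name_in htbl P a b ha hb n k π _ hπ ht (step_ok hs ho))

/- Part 7: simulation. -/

def Good (G : ℕ → St) (N : ℕ) (pole : LC → Prop) (i : ℕ) (D : Finset ℕ) (σ : ℕ → LC) : Prop :=
  ∀ k ∈ D, 2 ≤ k → ∀ i', (_h1 : i ≤ i') → (_h2 : i' < N) → ∀ D' π, G i' = .call D' k π →
    D ⊆ D' → ∀ σ' : ℕ → LC, (∀ x ∈ D, σ x = σ' x) → Good G N pole (i'+1) D' σ' →
      pole (LC.appSpine (σ k) (π.map (LC.subst σ')))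
termination_by N - i
decreasing_by omega

theorem good_mono {G : ℕ → St} {N : ℕ} {pole : LC → Prop} {i j : ℕ} {D : Finset ℕ}
    {σ : ℕ → LC} (h : Good G N pole i D σ) (hij : i ≤ j) : Good G N pole j D σ := by
  rw [Good] at h ⊢
  intro k hk h2 i' h3
  exact h k hk h2 i' (hij.trans h3)

theorem agree_insert {D D' : Finset ℕ} {σ σ' : ℕ → LC} {k : ℕ} {t : LC} (hk : k ∉ D)
    (hD : D' = insert k D)
    (h : ∀ x ∈ D', Function.update σ k t x = σ' x) : (∀ x ∈ D, σ x = σ' x) ∧ σ' k = t := by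
  subst hD
  constructor
  · intro x hx
    have := h x (Finset.mem_insert_of_mem hx)
    rwa [Function.update_of_ne (ne_of_mem_of_not_mem hx hk)] at this
  · have := h k (Finset.mem_insert_self _ _)
    simpa using this.symm

theorem update_agree {D : Finset ℕ} {σ : ℕ → LC} {k : ℕ} {t : LC} (hk : k ∉ D) :
    ∀ x ∈ D, Function.update σ k t x = σ x := by
  intro x hx
  rw [Function.update_of_ne (ne_of_mem_of_not_mem hx hk)]

theorem map_agree {D : Finset ℕ} {σ σ' : ℕ → LC} {π : List LC}
    (hπ : ∀ p ∈ π, FVin (fun i => i ∈ D) p) (h : ∀ x ∈ D, σ x = σ' x) :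
    π.map (LC.subst σ) = π.map (LC.subst σ') :=
  List.map_congr_left (fun p hp => subst_agree p _ _ _ (hπ p hp) h)

theorem good_insert {G : ℕ → St} {N : ℕ} {pole : LC → Prop} {i : ℕ} {D : Finset ℕ}
    {σ : ℕ → LC} {k : ℕ} {t : LC} (hk : k ∉ D) (h : Good G N pole i D σ)
    (ht : ∀ i', i ≤ i' → i' < N → ∀ D' π, G i' = .call D' k π → insert k D ⊆ D' →
      ∀ σ' : ℕ → LC, (∀ x ∈ D, σ x = σ' x) → Good G N pole (i'+1) D' σ' →
      pole (LC.appSpine t (π.map (LC.subst σ')))) :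
    Good G N pole i (insert k D) (Function.update σ k t) := by
  rw [Good] at h ⊢
  intro k' hk' h2 i' h3 h4 D' π hG hD σ' ha hg
  obtain ⟨ha1, ha2⟩ := agree_insert hk rfl ha
  rcases Finset.mem_insert.1 hk' with rfl | hk'
  · rw [Function.update_self]
    exact ht i' h3 h4 D' π hG hD σ' ha1 hg
  · rw [update_agree hk _ hk']
    exact h k' hk' h2 i' h3 h4 D' π hG ((Finset.subset_insert _ _).trans hD) σ' ha1 hg

theorem sim {G : ℕ → St} {N : ℕ} {pole : LC → Prop} {τ θ : LC}
    (hp : ∀ t t', LC.HCStep t t' → pole t' → pole t)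
    (hstep : ∀ i < N, Step tbl n (G i) (G (i+1))) (hok : ∀ i ≤ N, Ok tbl (G i))
    {DN : Finset ℕ} (hN : G N = .run DN (.app (.var 0) τ))
    (hfin : ∀ σ : ℕ → LC, σ 0 = .var 0 → pole (LC.app (.var 0) (τ.subst σ)))
    (hθ : ∀ (P : ℕ → Set (List LC)) (a b : LC), a ∈ orth pole (P 0) →
      (∀ j, ∀ u ∈ orth pole (P j), LC.app b u ∈ orth pole (P (j+1))) →
      LC.app (.app θ a) b ∈ orth pole (P n)) :
    ∀ M i, N - i = M → i ≤ N → ∀ D t, G i = .run D t → ∀ σ : ℕ → LC, σ 0 = .var 0 →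
      σ 1 = θ → Good G N pole i D σ → pole (t.subst σ) := by
  intro M
  induction M using Nat.strong_induction_on with
  | _ M IH =>
  intro i hM hi D t hG σ h0 h1 hg
  rcases Nat.eq_or_lt_of_le hi with rfl | hlt
  · rw [hN] at hG
    injection hG with _ hG
    subst hG
    simp only [LC.subst, h0]
    exact hfin σ h0
  have IH' : ∀ i', i < i' → i' ≤ N → ∀ D t, G i' = .run D t → ∀ σ : ℕ → LC, σ 0 = .var 0 →
      σ 1 = θ → Good G N pole i' D σ → pole (t.subst σ) := by
    intro i' h1 h2
    exact IH (N - i') (by omega) i' rfl h2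
  have hs := hstep i hlt
  have ho := hok i hi
  rw [hG] at hs ho
  generalize hG' : G (i+1) = s' at hs
  cases hs with
  | hc h =>
    exact hp _ _ (hcstep_subst h σ)
      (IH' (i+1) (by omega) hlt _ _ hG' σ h0 h1 (good_mono hg (by omega)))
  | @cv _ k π hk =>
    have hlt' : i + 1 < N := by
      rcases Nat.eq_or_lt_of_le (Nat.succ_le_of_lt hlt) with e | e
      · rw [← e] at hN
        rw [hN] at hG'
        cases hG'
      · exact e
    have hfv := ho.2
    rw [fv_spine] at hfv
    rw [appSpine_subst]
    have hg' := good_mono hg (show i ≤ i + 1 + 1 by omega)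
    rw [Good] at hg
    exact hg k hfv.1 hk (i+1) (by omega) hlt' D π hG' (Finset.Subset.refl _) σ
      (fun _ _ => rfl) hg'
  | @nu _ a b π k hk ht =>
    have hlt' : i + 1 < N := by
      rcases Nat.eq_or_lt_of_le (Nat.succ_le_of_lt hlt) with e | e
      · rw [← e] at hN
        rw [hN] at hG'
        cases hG'
      · exact e
    obtain ⟨hoD, hfv⟩ := ho
    rw [fv_spine] at hfv
    obtain ⟨⟨⟨_, hfa⟩, hfb⟩, hfπ⟩ := hfv
    let P : ℕ → Set (List LC) := fun j => {π₀ | ∃ i' D' k' π' σ', i < i' ∧ i' < N ∧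
      G i' = .call D' k' π' ∧ tbl k' = (a, b, j) ∧ D ⊆ D' ∧ (∀ x ∈ D, σ x = σ' x) ∧
      Good G N pole (i'+1) D' σ' ∧ π₀ = π'.map (LC.subst σ')}
    have hA : a.subst σ ∈ orth pole (P 0) := by
      rintro _ ⟨i', D', k', π', σ', h2, h3, h4, h5, h6, h7, h8, rfl⟩
      have hs' := hstep i' h3
      rw [h4] at hs'
      generalize hG2 : G (i'+1) = s2 at hs'
      cases hs' with
      | z ht2 =>
        rw [h5] at ht2
        injection ht2 with e1 e2
        subst e1
        have := IH' (i'+1) (by omega) h3 _ _ hG2 σ' ((h7 0 hoD.1).symm.trans h0)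
          ((h7 1 hoD.2.1).symm.trans h1) h8
        rw [appSpine_subst] at this
        rwa [subst_agree a _ σ σ' hfa h7]
      | s ht2 _ _ =>
        rw [h5] at ht2
        simp at ht2
    have hB : ∀ j, ∀ u ∈ orth pole (P j), LC.app (b.subst σ) u ∈ orth pole (P (j+1)) := by
      rintro j u hu _ ⟨i', D', k', π', σ', h2, h3, h4, h5, h6, h7, h8, rfl⟩
      have hs' := hstep i' h3
      have ho' := hok i' h3.le
      rw [h4] at hs' ho'
      generalize hG2 : G (i'+1) = s2 at hs'
      cases hs' with
      | z ht2 =>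
        rw [h5] at ht2
        simp at ht2
      | @s _ _ _ a' b' j' k'' ht2 hk'' ht3 =>
        rw [h5] at ht2
        simp only [Prod.mk.injEq, Nat.add_right_cancel_iff] at ht2
        obtain ⟨rfl, rfl, rfl⟩ := ht2
        have hD0 : (0 : ℕ) ∈ D' := h6 hoD.1
        have hD1 : (1 : ℕ) ∈ D' := h6 hoD.2.1
        have := IH' (i'+1) (by omega) h3 _ _ hG2 (Function.update σ' k'' u)
          ((update_agree hk'' 0 hD0).trans ((h7 0 hoD.1).symm.trans h0))
          ((update_agree hk'' 1 hD1).trans ((h7 1 hoD.2.1).symm.trans h1)) ?_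
        · rw [appSpine_subst] at this
          simp only [LC.subst, Function.update_self] at this
          rw [map_agree ho'.2.2.2 (update_agree hk'')] at this
          rw [subst_agree b _ σ (Function.update σ' k'' u) hfb]
          · exact this
          · intro x hx
            rw [update_agree hk'' x (h6 hx)]
            exact h7 x hx
        · apply good_insert hk'' h8
          intro i2 h9 h10 D2 π2 hGi2 hD2 σ2 ha2 hg2
          refine hu _ ⟨i2, D2, k'', π2, σ2, by omega, h10, hGi2, ht3, ?_, ?_, hg2, rfl⟩
          · exact h6.trans ((Finset.subset_insert _ _).trans hD2)
          · intro x hx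
            exact (h7 x hx).trans (ha2 x (h6 hx))
    have hC := hθ P _ _ hA hB
    have hgood : Good G N pole (i+1+1) (insert k D)
        (Function.update σ k (LC.app (.app θ (a.subst σ)) (b.subst σ))) := by
      apply good_insert hk (good_mono hg (by omega))
      intro i2 h9 h10 D2 π2 hGi2 hD2 σ2 ha2 hg2
      exact hC _ ⟨i2, D2, k, π2, σ2, by omega, h10, hGi2, ht,
        (Finset.subset_insert _ _).trans hD2, ha2, hg2, rfl⟩
    rw [appSpine_subst]
    simp only [LC.subst, h1]
    refine hC _ ⟨i+1, insert k D, k, π, _, by omega, hlt', hG', ht, Finset.subset_insert _ _,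
      ?_, hgood, ?_⟩
    · intro x hx
      exact (update_agree hk x hx).symm
    · exact map_agree hfπ (fun x hx => (update_agree hk x hx).symm)

end Machine

/- Part 8: conclusion. -/

theorem mem_N (pole : LC → Prop) (k : PK) (tm : FOTerm NatSig) (ρ : ℕ → ℕ) (V : Val) (u : LC) :
    u ∈ sem Inat pole (NFormK k tm) ρ V ↔ ∀ F, Adm pole k F → ∀ a ∈ F [0], ∀ b,
      (∀ j, ∀ v ∈ F [j], LC.app b v ∈ F [j+1]) → LC.app (.app u a) b ∈ F [ev Inat ρ tm] := by
  have e : ∀ F X, push k F V k X = ncons F (V k) X := by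
    intro F X
    simp [push]
  simp only [NFormK, sem, e]
  rfl

theorem theta_in {E : Set (FOTerm NatSig × FOTerm NatSig)} (hE : Adequate E)
    {pole : LC → Prop} (hp : ∀ t t', LC.HCStep t t' → pole t' → pole t) {θ : LC} {n : ℕ}
    (hθ : M2 NatSig E [] θ (NFormK PK.sp (numT n))) (P : ℕ → Set (List LC)) (a b : LC)
    (ha : a ∈ orth pole (P 0))
    (hb : ∀ j, ∀ u ∈ orth pole (P j), LC.app b u ∈ orth pole (P (j+1))) :
    LC.app (.app θ a) b ∈ orth pole (P n) := by
  have h := adequacy Inat hp (eqE_sound hE) hθ (fun _ => 0) (fun _ _ _ => orth pole ∅)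
    (fun k X => by
      cases k with
      | pl => exact fun l => sat_orth hp ∅
      | sp => exact fun l => ⟨∅, rfl⟩) LC.var (fun i B h => by simp at h)
  rw [subst_var, mem_N, ev_numT] at h
  exact h (fun l => orth pole (P l.headI)) (fun l => ⟨_, rfl⟩) a ha b hb

theorem wins_T {E : Set (FOTerm NatSig × FOTerm NatSig)} (hE : Adequate E)
    {T : LC} (hT : M2 NatSig E [] T storTypeC) (n : ℕ) {tbl : ℕ → LC × LC × ℕ}
    (htbl : ∀ x (D : Finset ℕ), ∃ k, k ∉ D ∧ tbl k = x) :
    Wins tbl n (.run {0, 1} (.app (.app T (.var 1)) (.var 0))) := by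
  have h := adequacy Inat (poleT_hc (tbl := tbl) (n := n)) (eqE_sound hE) hT (fun _ => 0)
    (fun _ _ _ => orth (poleT tbl n) ∅)
    (fun k X => by
      cases k with
      | pl => exact fun l => sat_orth poleT_hc ∅
      | sp => exact fun l => ⟨∅, rfl⟩) LC.var (fun i B h => by simp at h)
  rw [subst_var] at h
  have h2 := h n (.var 1) ?_ (.var 0) ?_
  · refine h2 {0, 1} ⟨⟨by simp, by simp, ?_⟩, ⟨?_, ?_⟩, ?_⟩
    · intro k hk h2
      simp only [Finset.mem_insert, Finset.mem_singleton] at hk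
      omega
    · exact fv_mono (fv_typed hT) (fun i hi => by simp at hi)
    · simp [FVin]
    · simp [FVin]
  · rw [mem_N]
    intro F hF a ha b hb
    choose P hP using hF
    simp only [hP] at ha hb ⊢
    exact nu_in htbl (fun j => P [j]) a b ha hb
  · intro u hu D ho
    rw [mem_N] at hu
    obtain ⟨M, hM⟩ := fv_bounded u
    have h3 := hu (fun l => {t | BStar t (LC.iterApp (.var M) l.headI (.var (M+1)))})
      ?_ (.var (M+1)) ?_ (.var M) ?_
    · exact ⟨u, church_of_bstar hM h3, fun _ => .run D (.app (.var 0) u), 0, rfl,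
        fun i hi => absurd hi (Nat.not_lt_zero i), fun i _ => ho, D, rfl⟩
    · intro l v t ts h
      refine Relation.ReflTransGen.head ?_ h
      clear h
      have gen : ∀ (ts : List LC) (p q : LC), LC.Beta p q →
          LC.Beta (LC.appSpine p ts) (LC.appSpine q ts) := by
        intro ts
        induction ts with
        | nil => intro p q h; exact h
        | cons c ts ih => intro p q h; exact ih _ _ (LC.Beta.appL c h)
      exact gen ts _ _ (LC.Beta.beta v t)
    · exact Relation.ReflTransGen.refl
    · intro j v hv
      exact bstar_appR hv

end Stor

open LC in
/-- The storage theorem in the mixed system M2 : if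
`⊢_M2 T : ∀x{N^C[x] → ¬¬N[x]}`, then `T` is a storage operator for classical
integers : for every `n` there is a λC-term `τₙ ≃β n̲` such that for every
classical integer `θₙ` of value `n` there is a substitution `σ` with
`(T)θₙf ≻_C (f)σ(τₙ)`. -/
theorem stmt16 (E : Set (FOTerm NatSig × FOTerm NatSig)) (hE : Adequate E)
    (T : LC) (hT : M2 NatSig E [] T storTypeC) :
    ∀ n : ℕ, ∃ τ : LC, BetaEq τ (church n) ∧
      ∀ θ : LC, Closed θ → M2 NatSig E [] θ (NFormK PK.sp (numT n)) →
        ∃ σ : ℕ → LC, σ 0 = var 0 ∧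
          HCRed (app (app T θ) (var 0)) (app (var 0) (τ.subst σ)) := by
  intro n
  obtain ⟨tbl, htbl⟩ := Stor.exists_tbl
  obtain ⟨τ, hτ, G, N, hG0, hstep, hok, D, hN⟩ := Stor.wins_T hE hT n htbl
  refine ⟨τ, hτ, ?_⟩
  intro θ _ hθ
  have hTc : ∀ σ, T.subst σ = T := by
    intro σ
    have h := Stor.subst_agree T _ σ LC.var (Stor.fv_typed hT) (fun i hi => by simp at hi)
    rw [h, Stor.subst_var]
  let pole : LC → Prop := fun t => ∃ σ : ℕ → LC, σ 0 = var 0 ∧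
    HCRed t (app (var 0) (τ.subst σ))
  have hp : ∀ t t', HCStep t t' → pole t' → pole t := by
    rintro t t' h ⟨σ, h0, h1⟩
    exact ⟨σ, h0, Relation.ReflTransGen.head h h1⟩
  have hfin : ∀ σ : ℕ → LC, σ 0 = .var 0 → pole (LC.app (.var 0) (τ.subst σ)) :=
    fun σ h0 => ⟨σ, h0, Relation.ReflTransGen.refl⟩
  have hmain := Stor.sim hp hstep hok hN hfin (Stor.theta_in hE hp hθ) N 0 (by omega)
    (by omega) _ _ hG0 (Stor.cons (var 0) (Stor.cons θ LC.var)) rfl rfl ?_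
  · simp only [LC.subst, hTc] at hmain
    exact hmain
  · rw [Stor.Good]
    intro k hk h2
    simp only [Finset.mem_insert, Finset.mem_singleton] at hk
    omega
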